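/- Boundary trace of the representation formula with coefficient c(x) = 1/2 on a sphere: let B = B(c, R) ⊆ ℝ³ be the open ball of center c and radius R > 0, and let φ be harmonic on an open neighborhood of the closed ball. Then for every boundary point x with ‖x − c‖ = R, the function ω ↦ [ G(c + Rω − x) (∇φ(c + Rω) · ω) − φ(c + Rω) (∇G(c + Rω − x) · ω) ] R², defined for c + Rω ≠ x, is integrable on S² with respect to σ, and (1/2) φ(x) = ∫_{S²} [ G(c + Rω − x) (∇φ(c + Rω) · ω) − φ(c + Rω) (∇G(c + Rω − x) · ω) ] R² dσ(ω). -/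

import Mathlib

open MeasureTheory Metric
open scoped RealInnerProductSpace

/-- The free-space Green's function of the Laplace equation in ℝ³. -/
noncomputable def G (z : EuclideanSpace ℝ (Fin 3)) : ℝ := 1 / (4 * Real.pi * ‖z‖)

/-- The Laplacian of a scalar function on ℝ³: the sum of the three unmixed second
partial derivatives. -/
noncomputable def lap (u : EuclideanSpace ℝ (Fin 3) → ℝ)
    (y : EuclideanSpace ℝ (Fin 3)) : ℝ :=
  ∑ i : Fin 3,
    fderiv ℝ (fun z => fderiv ℝ u z (EuclideanSpace.single i 1)) y
      (EuclideanSpace.single i 1)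

/-!
For `y` on the sphere of radius `r` about `c`, the kernel `K y = ‖y - x‖ ^ (-m)`, which is harmonic
off `x` in dimension `m + 2`, satisfies `2 ⟪∇K y, y - c⟫ = m (P y - K y)`, where
`P y = (‖x - c‖ ^ 2 - r ^ 2) ‖y - x‖ ^ (-m - 2)` is a multiple of the Poisson kernel. By Green's
identity on a sphere inside the ball and the mean value property of `K`, it follows that the density
`K (2 r ∂u/∂n + m u) - m P (u - u x)` has an integral proportional to `u x`, with a factor
independent of `r`. Since `|u - u x|` compensates one order of the singularity of `P`, this density
is dominated by a multiple of `K`, so `r` may tend to `R = ‖x - c‖`. There `P` vanishes off `x`, so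
that `m K = -2 R ∂K/∂n` and the density becomes `2 R (K ∂u/∂n - u ∂K/∂n)`. Its integral over the
unit sphere `S` is still `m |S| R ^ (-m) u x`, and dividing by `2 R` yields the coefficient `1 / 2`.
-/

open InnerProductSpace Module Filter Set Laplacian
open scoped Topology Gradient

section Sphere

variable {E : Type*} [NormedAddCommGroup E] [NormedSpace ℝ E] [FiniteDimensional ℝ E]
  [MeasurableSpace E] [BorelSpace E] {F : Type*} [NormedAddCommGroup F] [NormedSpace ℝ F]
  {μ : Measure E} [μ.IsAddHaarMeasure]

lemma integral_eq_integral_Ioi_integral_sphere [Nontrivial E] {f : E → F}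
    (hf : Integrable f μ) :
    ∫ y, f y ∂μ = ∫ r in Ioi (0 : ℝ), r ^ (finrank ℝ E - 1) •
      ∫ ω : sphere (0 : E) 1, f (r • (ω : E)) ∂μ.toSphere := by
  have polar := μ.measurePreserving_homeomorphUnitSphereProd
  have emb := (homeomorphUnitSphereProd E).measurableEmbedding
  set g : sphere (0 : E) 1 × Ioi (0 : ℝ) → F := fun p ↦ f ((p.2 : ℝ) • (p.1 : E))
  have g_polar (y : ({0}ᶜ : Set E)) : g (homeomorphUnitSphereProd E y) = f y := by
    simp only [g, ← homeomorphUnitSphereProd_symm_apply_coe, Homeomorph.symm_apply_apply]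
  have g_integrable : Integrable g (μ.toSphere.prod (.volumeIoiPow (finrank ℝ E - 1))) := by
    rw [← polar.integrable_comp_emb emb, show g ∘ homeomorphUnitSphereProd E = f ∘ (↑) from
      funext g_polar, ← integrableOn_iff_comap_subtypeVal (measurableSet_singleton _).compl]
    exact hf.integrableOn
  calc ∫ y, f y ∂μ = ∫ y : ({0}ᶜ : Set E), f y ∂μ.comap (↑) := by
        rw [integral_subtype_comap (measurableSet_singleton _).compl f, restrict_compl_singleton]
    _ = ∫ p, g p ∂μ.toSphere.prod (.volumeIoiPow (finrank ℝ E - 1)) := by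
        rw [← polar.integral_comp emb]
        simp only [g_polar]
    _ = ∫ r : Ioi (0 : ℝ), ∫ ω, g (ω, r) ∂μ.toSphere ∂.volumeIoiPow (finrank ℝ E - 1) :=
        integral_prod_symm _ g_integrable
    _ = _ := by
        simp only [Measure.volumeIoiPow, ENNReal.ofReal]
        rw [integral_withDensity_eq_integral_smul
            (measurable_subtype_coe.pow_const _).real_toNNReal,
          integral_subtype_comap measurableSet_Ioi fun r : ℝ ↦ (r ^ (finrank ℝ E - 1)).toNNReal •
            ∫ ω : sphere (0 : E) 1, f (r • (ω : E)) ∂μ.toSphere]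
        refine setIntegral_congr_fun measurableSet_Ioi fun r hr ↦ ?_
        simp only [NNReal.smul_def, Real.coe_toNNReal _ (pow_nonneg (mem_Ioi.1 hr).le _)]

lemma toSphere_singleton (hE : 2 ≤ finrank ℝ E) (ξ : sphere (0 : E) 1) :
    μ.toSphere {ξ} = 0 := by
  have span_ne_top : Submodule.span ℝ {(ξ : E)} ≠ ⊤ := fun h ↦ by
    have := finrank_span_singleton (K := ℝ) (ne_zero_of_mem_unit_sphere ξ)
    rw [h, finrank_top] at this
    omega
  rw [Measure.toSphere_apply' _ (measurableSet_singleton ξ), image_singleton]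
  refine mul_eq_zero_of_right _ (measure_mono_null ?_ (Measure.addHaar_submodule μ _ span_ne_top))
  rintro _ ⟨r, -, _, rfl, rfl⟩
  exact Submodule.smul_mem _ r (Submodule.mem_span_singleton_self _)

lemma ae_add_smul_sphere_ne (hE : 2 ≤ finrank ℝ E) (c x : E) {r : ℝ} (hr : r ≠ 0) :
    ∀ᵐ ω : sphere (0 : E) 1 ∂μ.toSphere, c + r • (ω : E) ≠ x := by
  have subsingleton : {ω : sphere (0 : E) 1 | c + r • (ω : E) = x}.Subsingleton :=
    fun ω hω η hη ↦ Subtype.ext (smul_right_injective E hr (add_left_cancel (hω.trans hη.symm)))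
  rw [ae_iff]
  simp only [not_not]
  obtain h | ⟨ξ, h⟩ := subsingleton.eq_empty_or_singleton
  · rw [h, measure_empty]
  · rw [h, toSphere_singleton hE]

lemma continuousOn_integral_sphere {f : ℝ → E → F} {s : Set ℝ}
    (hf : ContinuousOn (Function.uncurry f) (s ×ˢ sphere 0 1)) :
    ContinuousOn (fun r ↦ ∫ ω : sphere (0 : E) 1, f r ω ∂μ.toSphere) s :=
  continuousOn_integral_of_compact_support isCompact_univ
    (hf.comp (f := fun p : ℝ × sphere (0 : E) 1 ↦ (p.1, (p.2 : E))) (by fun_prop)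
      fun p hp ↦ ⟨hp.1, p.2.2⟩)
    fun _ _ _ h ↦ (h (mem_univ _)).elim

end Sphere

lemma integrable_fderiv_apply {E F : Type*} [NormedAddCommGroup E] [NormedSpace ℝ E]
    [MeasurableSpace E] [OpensMeasurableSpace E] [NormedAddCommGroup F] [NormedSpace ℝ F]
    {μ : Measure E} [IsFiniteMeasureOnCompacts μ] {f : E → F} (hf : ContDiff ℝ 1 f)
    (hc : HasCompactSupport f) (v : E) : Integrable (fun y ↦ fderiv ℝ f y v) μ :=
  ((hf.continuous_fderiv one_ne_zero).clm_apply continuous_const).integrable_of_hasCompactSupport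
    ((hc.fderiv ℝ).comp_left (g := fun L : E →L[ℝ] F ↦ L v) rfl)

section Divergence

variable {E : Type*} [NormedAddCommGroup E] [InnerProductSpace ℝ E]

/-- The divergence of a vector field, as the trace of its Fréchet derivative. -/
noncomputable def divergence (F : E → E) (y : E) : ℝ := LinearMap.trace ℝ E (fderiv ℝ F y)

lemma divergence_congr {F F' : E → E} {y : E} (h : F =ᶠ[𝓝 y] F') :
    divergence F y = divergence F' y := by
  rw [divergence, divergence, h.fderiv_eq]

lemma divergence_sub {F₁ F₂ : E → E} {y : E} (h₁ : DifferentiableAt ℝ F₁ y)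
    (h₂ : DifferentiableAt ℝ F₂ y) :
    divergence (fun z ↦ F₁ z - F₂ z) y = divergence F₁ y - divergence F₂ y := by
  simp only [divergence, fderiv_fun_sub h₁ h₂, ContinuousLinearMap.toLinearMap_sub, map_sub]

variable [FiniteDimensional ℝ E]

lemma divergence_smul {ψ : E → ℝ} {F : E → E} {y : E} (hψ : DifferentiableAt ℝ ψ y)
    (hF : DifferentiableAt ℝ F y) :
    divergence (fun z ↦ ψ z • F z) y = ψ y * divergence F y + ⟪∇ ψ y, F y⟫ := by
  have fderiv_eq : (fderiv ℝ (fun z ↦ ψ z • F z) y : E →ₗ[ℝ] E) =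
      ψ y • (fderiv ℝ F y : E →ₗ[ℝ] E) + (fderiv ℝ ψ y : E →ₗ[ℝ] ℝ).smulRight (F y) := by
    ext v
    simp [fderiv_fun_smul hψ hF]
  simp only [divergence, fderiv_eq, map_add, map_smul, smul_eq_mul, LinearMap.trace_smulRight,
    ContinuousLinearMap.coe_coe, inner_gradient_left]

lemma contDiffAt_gradient {u : E → ℝ} {y : E} {n : WithTop ℕ∞} (hu : ContDiffAt ℝ (n + 1) u y) :
    ContDiffAt ℝ n (∇ u) y :=
  (toDual ℝ E).symm.toContinuousLinearEquiv.contDiff.contDiffAt.comp y (hu.fderiv_right le_rfl)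

lemma divergence_gradient (u : E → ℝ) (y : E) : divergence (∇ u) y = Δ u y := by
  have second_deriv (v w : E) : ⟪fderiv ℝ (∇ u) y v, w⟫ = fderiv ℝ (fderiv ℝ u) y v w := by
    have := (toDual ℝ E).toContinuousLinearEquiv.comp_fderiv (f := ∇ u) (x := y)
    rw [← toDual_comp_gradient]
    exact (DFunLike.congr_fun (DFunLike.congr_fun this v) w).symm
  rw [divergence, LinearMap.trace_eq_sum_inner _ (stdOrthonormalBasis ℝ E),
    laplacian_eq_iteratedFDeriv_stdOrthonormalBasis]
  refine Finset.sum_congr rfl fun i _ ↦ ?_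
  rw [real_inner_comm, ContinuousLinearMap.coe_coe, second_deriv, iteratedFDeriv_two_apply]
  rfl

variable [MeasurableSpace E] [BorelSpace E] {μ : Measure E} [μ.IsAddHaarMeasure]

lemma integrable_divergence {F : E → E} (hF : ContDiff ℝ 1 F) (hc : HasCompactSupport F) :
    Integrable (divergence F) μ := by
  unfold divergence
  simp only [LinearMap.trace_eq_sum_inner _ (stdOrthonormalBasis ℝ E), ContinuousLinearMap.coe_coe]
  exact integrable_finsetSum _ fun i _ ↦ (integrable_fderiv_apply hF hc _).const_inner _

lemma integral_divergence_eq_zero {F : E → E} (hF : ContDiff ℝ 1 F) (hc : HasCompactSupport F) :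
    ∫ y, divergence F y ∂μ = 0 := by
  have integral_fderiv (v : E) : ∫ y, fderiv ℝ F y v ∂μ = 0 := by
    have := integral_smul_fderiv_eq_neg_fderiv_smul_of_integrable (μ := μ) (𝕜 := ℝ)
      (f := fun _ ↦ (1 : ℝ)) (g := F) (v := v) (by simp)
      (by simpa using integrable_fderiv_apply hF hc v)
      (by simpa using hF.continuous.integrable_of_hasCompactSupport hc)
      (fun _ _ ↦ differentiableAt_const _) (fun y _ ↦ hF.differentiable one_ne_zero y)
    simpa using this
  simp only [divergence, LinearMap.trace_eq_sum_inner _ (stdOrthonormalBasis ℝ E),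
    ContinuousLinearMap.coe_coe]
  rw [integral_finsetSum _ fun i _ ↦ (integrable_fderiv_apply hF hc _).const_inner _]
  simp only [integral_inner (integrable_fderiv_apply hF hc _), integral_fderiv, inner_zero_right,
    Finset.sum_const_zero]

end Divergence

section Flux

variable {E : Type*} [NormedAddCommGroup E] [InnerProductSpace ℝ E]

lemma norm_smul_sphere {r : ℝ} (hr : 0 ≤ r) (ω : sphere (0 : E) 1) : ‖r • (ω : E)‖ = r := by
  rw [norm_smul, norm_eq_of_mem_sphere, mul_one, Real.norm_of_nonneg hr]

lemma add_smul_sphere_mem_ball {r ρ : ℝ} (hr : r ∈ Ico 0 ρ) (c : E) (ω : sphere (0 : E) 1) :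
    c + r • (ω : E) ∈ ball c ρ := by
  rw [mem_ball_iff_norm, add_sub_cancel_left, norm_smul_sphere hr.1]
  exact hr.2

lemma add_smul_sphere_mem_closedBall {r ρ : ℝ} (hr : r ∈ Icc 0 ρ) (c : E) (ω : sphere (0 : E) 1) :
    c + r • (ω : E) ∈ closedBall c ρ := by
  rw [mem_closedBall_iff_norm, add_sub_cancel_left, norm_smul_sphere hr.1]
  exact hr.2

variable [FiniteDimensional ℝ E]

lemma exists_contDiff_gradient_eq_smul {k : ℝ → ℝ} (hk : Continuous k) {b : ℝ}
    (hkb : ∀ s, b ≤ s → k s = 0) :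
    ∃ ψ : E → ℝ, ContDiff ℝ 1 ψ ∧ (∀ y, b ≤ ‖y‖ ^ 2 → ψ y = 0) ∧
      ∀ y, ∇ ψ y = (2 * k (‖y‖ ^ 2)) • y := by
  set η : ℝ → ℝ := fun s ↦ ∫ t in b..s, k t
  have hη (s : ℝ) : HasDerivAt η (k s) s := (hk.integral_hasStrictDerivAt b s).hasDerivAt
  have η_contDiff : ContDiff ℝ 1 η :=
    contDiff_one_iff_deriv.2 ⟨fun s ↦ (hη s).differentiableAt, by
      rwa [show deriv η = k from funext fun s ↦ (hη s).deriv]⟩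
  refine ⟨fun y ↦ η (‖y‖ ^ 2), η_contDiff.comp (contDiff_norm_sq ℝ), fun y hy ↦ ?_, fun y ↦ ?_⟩
  · refine (intervalIntegral.integral_congr fun t ht ↦ ?_).trans intervalIntegral.integral_zero
    exact hkb t (uIcc_of_le hy ▸ ht).1
  · refine HasGradientAt.gradient (hasGradientAt_iff_hasFDerivAt.2 ?_)
    refine ((hη _).comp_hasFDerivAt y (hasStrictFDerivAt_norm_sq y).hasFDerivAt).congr_fderiv ?_
    ext v
    simp [mul_assoc, mul_left_comm]

variable [MeasurableSpace E] [BorelSpace E] {μ : Measure E} [μ.IsAddHaarMeasure]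

lemma integrable_and_integral_radial_mul_inner_eq_zero {F : E → E} {ρ : ℝ}
    (hF : ContDiffOn ℝ 1 F (ball 0 ρ)) (hdiv : ∀ y ∈ ball 0 ρ, divergence F y = 0)
    {k : ℝ → ℝ} (hk : Continuous k) {b : ℝ} (hb : 0 ≤ b) (hbρ : b < ρ)
    (hkb : ∀ s, b ^ 2 ≤ s → k s = 0) :
    Integrable (fun y ↦ k (‖y‖ ^ 2) * ⟪F y, y⟫) μ ∧ ∫ y, k (‖y‖ ^ 2) * ⟪F y, y⟫ ∂μ = 0 := by
  obtain ⟨ψ, ψ_contDiff, ψ_zero, ψ_gradient⟩ := exists_contDiff_gradient_eq_smul (E := E) hk hkb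
  have support_subset : Function.support (fun y ↦ ψ y • F y) ⊆ closedBall 0 b := fun y hy ↦ by
    by_contra hyb
    rw [mem_closedBall_zero_iff, not_le] at hyb
    exact hy (by simp only [ψ_zero y (by gcongr), zero_smul])
  have tsupport_subset : tsupport (fun y ↦ ψ y • F y) ⊆ ball 0 ρ :=
    (closure_minimal support_subset isClosed_closedBall).trans (closedBall_subset_ball hbρ)
  have F_contDiffAt (y) (hy : y ∈ ball 0 ρ) : ContDiffAt ℝ 1 F y :=
    hF.contDiffAt (isOpen_ball.mem_nhds hy)
  have contDiff : ContDiff ℝ 1 (fun y ↦ ψ y • F y) := contMDiff_iff_contDiff.1 <|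
    contMDiff_of_tsupport fun y hy ↦
      (ψ_contDiff.contDiffAt.smul (F_contDiffAt y (tsupport_subset hy))).contMDiffAt
  have compact : HasCompactSupport (fun y ↦ ψ y • F y) :=
    .intro (isCompact_closedBall 0 b) fun y hy ↦
      Function.notMem_support.1 (mt (@support_subset y) hy)
  have divergence_eq (y : E) :
      (1 / 2) * divergence (fun z ↦ ψ z • F z) y = k (‖y‖ ^ 2) * ⟪F y, y⟫ := by
    by_cases hy : y ∈ ball 0 ρ
    · rw [divergence_smul (ψ_contDiff.differentiable one_ne_zero y)
        ((F_contDiffAt y hy).differentiableAt one_ne_zero), hdiv y hy, ψ_gradient,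
        real_inner_smul_left, real_inner_comm]
      ring
    · rw [divergence, fderiv_of_notMem_tsupport ℝ (mt (@tsupport_subset y) hy), hkb]
      · simp
      · rw [mem_ball_zero_iff, not_lt] at hy
        gcongr
        linarith
  simp only [← divergence_eq]
  exact ⟨(integrable_divergence contDiff compact).const_mul _, by
    rw [integral_const_mul, integral_divergence_eq_zero contDiff compact, mul_zero]⟩

lemma exists_lt_forall_ge_eq_zero {g : ℝ → ℝ} (hg : HasCompactSupport g) {ρ : ℝ} (hρ : 0 < ρ)
    (hgρ : tsupport g ⊆ Ioo 0 ρ) : ∃ b, 0 ≤ b ∧ b < ρ ∧ ∀ s, b ≤ s → g s = 0 := by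
  obtain empty | nonempty := (tsupport g).eq_empty_or_nonempty
  · exact ⟨0, le_rfl, hρ, fun s _ ↦ image_eq_zero_of_notMem_tsupport (by simp [empty])⟩
  · obtain ⟨t, ht, t_max⟩ := hg.isCompact.exists_isGreatest nonempty
    have := hgρ ht
    refine ⟨(t + ρ) / 2, by linarith [this.1], by linarith [this.2], fun s hs ↦
      image_eq_zero_of_notMem_tsupport fun hst ↦ ?_⟩
    linarith [t_max hst, this.2]

lemma integral_centered_sphere_inner_eq_zero [Nontrivial E] {F : E → E} {ρ : ℝ}
    (hF : ContDiffOn ℝ 1 F (ball 0 ρ)) (hdiv : ∀ y ∈ ball 0 ρ, divergence F y = 0)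
    {r : ℝ} (hr : r ∈ Ioo 0 ρ) :
    ∫ ω : sphere (0 : E) 1, ⟪F (r • (ω : E)), ω⟫ ∂μ.toSphere = 0 := by
  set flux : ℝ → ℝ := fun r ↦ r ^ (finrank ℝ E - 1 + 1) *
    ∫ ω : sphere (0 : E) 1, ⟪F (r • (ω : E)), ω⟫ ∂μ.toSphere with flux_def
  have flux_continuousOn : ContinuousOn flux (Ioo 0 ρ) := by
    refine (continuousOn_pow _).mul
      (continuousOn_integral_sphere (f := fun r ω ↦ ⟪F (r • ω), ω⟫) ?_)
    refine (hF.continuousOn.comp (by fun_prop) fun p hp ↦ ?_).inner continuousOn_snd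
    have : ‖p.1 • p.2‖ = p.1 := norm_smul_sphere hp.1.1.le ⟨p.2, hp.2⟩
    exact mem_ball_zero_iff.2 (this.trans_lt hp.1.2)
  -- In polar coordinates this tests the flux against functions of the radius, and
  -- `g ‖y‖ * ⟪F y, y⟫` integrates to zero, being the divergence of a compactly supported field.
  have flux_test (g : ℝ → ℝ) (hg : Continuous g) (hgc : HasCompactSupport g)
      (hgρ : tsupport g ⊆ Ioo 0 ρ) : ∫ s, g s • flux s = 0 := by
    obtain ⟨b, hb, hbρ, hgb⟩ := exists_lt_forall_ge_eq_zero hgc (hr.1.trans hr.2) hgρ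
    obtain ⟨integrable, integral_eq⟩ := integrable_and_integral_radial_mul_inner_eq_zero (μ := μ)
      hF hdiv (k := fun s ↦ g √s) (by fun_prop) hb hbρ fun s hs ↦ hgb _ (Real.le_sqrt_of_sq_le hs)
    rw [← integral_eq, integral_eq_integral_Ioi_integral_sphere integrable,
      ← setIntegral_eq_integral_of_forall_compl_eq_zero (s := Ioi 0) fun s hs ↦ by
        rw [image_eq_zero_of_notMem_tsupport fun h ↦ hs (hgρ h).1, zero_smul]]
    refine setIntegral_congr_fun measurableSet_Ioi fun s (hs : 0 < s) ↦ ?_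
    simp only [norm_smul_sphere hs.le, Real.sqrt_sq hs.le, real_inner_smul_right,
      integral_const_mul, smul_eq_mul, flux_def]
    ring
  have flux_ae : ∀ᵐ s, s ∈ Ioo 0 ρ → flux s = 0 :=
    isOpen_Ioo.ae_eq_zero_of_integral_contDiff_smul_eq_zero
      (flux_continuousOn.locallyIntegrableOn measurableSet_Ioo)
      fun g hg ↦ flux_test g hg.continuous
  have flux_zero : flux r = 0 := Measure.eqOn_open_of_ae_eq (g := 0)
    ((ae_restrict_iff' measurableSet_Ioo).2 flux_ae) isOpen_Ioo flux_continuousOn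
    continuousOn_const hr
  exact (mul_eq_zero.1 flux_zero).resolve_left (pow_ne_zero _ hr.1.ne')

lemma integral_sphere_inner_eq_zero [Nontrivial E] {F : E → E} {c : E} {ρ : ℝ}
    (hF : ContDiffOn ℝ 1 F (ball c ρ)) (hdiv : ∀ y ∈ ball c ρ, divergence F y = 0)
    {r : ℝ} (hr : r ∈ Ioo 0 ρ) :
    ∫ ω : sphere (0 : E) 1, ⟪F (c + r • (ω : E)), ω⟫ ∂μ.toSphere = 0 := by
  have translate_mem {y : E} (hy : y ∈ ball 0 ρ) : c + y ∈ ball c ρ := by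
    rwa [mem_ball_iff_norm, add_sub_cancel_left, ← mem_ball_zero_iff]
  refine integral_centered_sphere_inner_eq_zero (F := fun y ↦ F (c + y))
    (hF.comp (by fun_prop) fun y ↦ translate_mem) (fun y hy ↦ ?_) hr
  rw [divergence, fderiv_comp_add_left]
  exact hdiv _ (translate_mem hy)

end Flux

section Harmonic

variable {E : Type*} [NormedAddCommGroup E] [InnerProductSpace ℝ E] [FiniteDimensional ℝ E]
  {u v : E → ℝ} {c : E} {r ρ : ℝ}

lemma divergence_smul_gradient {y : E} (hu : DifferentiableAt ℝ u y) (hv : HarmonicAt v y) :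
    divergence (fun z ↦ u z • ∇ v z) y = ⟪∇ u y, ∇ v y⟫ := by
  rw [divergence_smul hu
    ((contDiffAt_gradient (n := 1) hv.1).differentiableAt one_ne_zero), divergence_gradient,
    hv.2.eq_of_nhds, Pi.zero_apply, mul_zero, zero_add]

lemma continuousOn_gradient {s : Set E} (hs : IsOpen s) (hu : ContDiffOn ℝ 1 u s) :
    ContinuousOn (∇ u) s := fun _ hy ↦
  (contDiffAt_gradient (n := 0) (hu.contDiffAt (hs.mem_nhds hy))).continuousAt.continuousWithinAt

lemma continuousOn_inner_gradient_ray (hu : ContDiffOn ℝ 1 u (ball c ρ)) :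
    ContinuousOn (fun p : ℝ × sphere (0 : E) 1 ↦ ⟪∇ u (c + p.1 • (p.2 : E)), p.2⟫)
      (Ico 0 ρ ×ˢ univ) :=
  ((continuousOn_gradient isOpen_ball hu).comp (by fun_prop) fun p hp ↦
    add_smul_sphere_mem_ball hp.1 c p.2).inner (by fun_prop)

lemma intervalIntegral_inner_gradient_ray (hu : ContDiffOn ℝ 1 u (ball c ρ)) (hr : r ∈ Ico 0 ρ)
    (ω : sphere (0 : E) 1) :
    ∫ t in 0..r, ⟪∇ u (c + t • (ω : E)), ω⟫ = u (c + r • (ω : E)) - u c := by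
  have mem_Ico {t : ℝ} (ht : t ∈ uIcc 0 r) : t ∈ Ico 0 ρ := by
    rw [uIcc_of_le hr.1] at ht
    exact ⟨ht.1, ht.2.trans_lt hr.2⟩
  have hasDerivAt (t) (ht : t ∈ uIcc 0 r) :
      HasDerivAt (fun t ↦ u (c + t • (ω : E))) ⟪∇ u (c + t • (ω : E)), ω⟫ t := by
    have hu_t := hu.contDiffAt (isOpen_ball.mem_nhds (add_smul_sphere_mem_ball (mem_Ico ht) c ω))
    rw [inner_gradient_left]
    refine (hu_t.differentiableAt one_ne_zero).hasFDerivAt.comp_hasDerivAt t ?_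
    simpa using ((hasDerivAt_id t).smul_const (ω : E)).const_add c
  have continuousOn : ContinuousOn (fun t ↦ ⟪∇ u (c + t • (ω : E)), ω⟫) (uIcc 0 r) :=
    (continuousOn_inner_gradient_ray hu).comp (f := fun t ↦ (t, ω)) (by fun_prop)
      fun t ht ↦ ⟨mem_Ico ht, mem_univ ω⟩
  simpa using intervalIntegral.integral_eq_sub_of_hasDerivAt hasDerivAt
    continuousOn.intervalIntegrable

variable [MeasurableSpace E] [BorelSpace E] {μ : Measure E} [μ.IsAddHaarMeasure]

lemma integrable_sphere {s : Set E} (hu : ContinuousOn u s)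
    (hs : ∀ ω : sphere (0 : E) 1, c + r • (ω : E) ∈ s) :
    Integrable (fun ω : sphere (0 : E) 1 ↦ u (c + r • (ω : E))) μ.toSphere :=
  (hu.comp_continuous (by fun_prop) hs).integrable_of_hasCompactSupport (.of_compactSpace _)

lemma integral_sphere_green [Nontrivial E] (hu : HarmonicOnNhd u (ball c ρ))
    (hv : HarmonicOnNhd v (ball c ρ)) (hr : r ∈ Ioo 0 ρ) :
    ∫ ω : sphere (0 : E) 1, (u (c + r • (ω : E)) * ⟪∇ v (c + r • (ω : E)), ω⟫ -
      v (c + r • (ω : E)) * ⟪∇ u (c + r • (ω : E)), ω⟫) ∂μ.toSphere = 0 := by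
  have contDiffAt {w₁ w₂ : E → ℝ} {y : E} (h₁ : HarmonicAt w₁ y) (h₂ : HarmonicAt w₂ y) :
      ContDiffAt ℝ 1 (fun z ↦ w₁ z • ∇ w₂ z) y :=
    (h₁.1.of_le one_le_two).smul (contDiffAt_gradient (n := 1) h₂.1)
  have contDiffOn : ContDiffOn ℝ 1 (fun y ↦ u y • ∇ v y - v y • ∇ u y) (ball c ρ) := fun y hy ↦
    ((contDiffAt (hu y hy) (hv y hy)).sub (contDiffAt (hv y hy) (hu y hy))).contDiffWithinAt
  have divergence_eq_zero (y) (hy : y ∈ ball c ρ) :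
      divergence (fun y ↦ u y • ∇ v y - v y • ∇ u y) y = 0 := by
    rw [divergence_sub ((contDiffAt (hu y hy) (hv y hy)).differentiableAt one_ne_zero)
        ((contDiffAt (hv y hy) (hu y hy)).differentiableAt one_ne_zero),
      divergence_smul_gradient ((hu y hy).1.differentiableAt two_ne_zero) (hv y hy),
      divergence_smul_gradient ((hv y hy).1.differentiableAt two_ne_zero) (hu y hy),
      real_inner_comm, sub_self]
  simpa only [inner_sub_left, real_inner_smul_left] using
    integral_sphere_inner_eq_zero (μ := μ) contDiffOn divergence_eq_zero hr

lemma integral_sphere_inner_gradient_eq_zero [Nontrivial E] (hu : HarmonicOnNhd u (ball c ρ))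
    (hr : r ∈ Ioo 0 ρ) :
    ∫ ω : sphere (0 : E) 1, ⟪∇ u (c + r • (ω : E)), ω⟫ ∂μ.toSphere = 0 := by
  simpa using integral_sphere_green (μ := μ) (harmonicOnNhd_const (1 : ℝ)) hu hr

lemma integral_sphere_eq_of_harmonicOnNhd [Nontrivial E] (hu : HarmonicOnNhd u (ball c ρ))
    (hr : r ∈ Ico 0 ρ) :
    ∫ ω : sphere (0 : E) 1, u (c + r • (ω : E)) ∂μ.toSphere = μ.toSphere.real univ * u c := by
  have hu_contDiffOn : ContDiffOn ℝ 1 u (ball c ρ) := hu.contDiffOn.of_le one_le_two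
  have integrable : Integrable (Function.uncurry fun t (ω : sphere (0 : E) 1) ↦
      ⟪∇ u (c + t • (ω : E)), ω⟫) ((volume.restrict (uIoc 0 r)).prod μ.toSphere) := by
    rw [uIoc_of_le hr.1, ← Measure.restrict_univ (μ := μ.toSphere), Measure.prod_restrict]
    have continuousOn := (continuousOn_inner_gradient_ray hu_contDiffOn).mono
      (prod_mono_left (t := univ) (Icc_subset_Ico_right hr.2))
    exact (continuousOn.integrableOn_compact (isCompact_Icc.prod isCompact_univ)).mono_set
      (prod_mono_left Ioc_subset_Icc_self)
  have integral_sub_eq_zero :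
      ∫ ω : sphere (0 : E) 1, (u (c + r • (ω : E)) - u c) ∂μ.toSphere = 0 := by
    simp only [← intervalIntegral_inner_gradient_ray hu_contDiffOn hr]
    rw [← intervalIntegral_integral_swap integrable]
    refine intervalIntegral.integral_zero_ae (ae_of_all _ fun t ht ↦ ?_)
    rw [uIoc_of_le hr.1] at ht
    exact integral_sphere_inner_gradient_eq_zero hu ⟨ht.1, ht.2.trans_lt hr.2⟩
  rw [integral_sub (integrable_sphere hu.continuousOn (add_smul_sphere_mem_ball hr c))
    (integrable_const _), integral_const, smul_eq_mul, sub_eq_zero] at integral_sub_eq_zero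
  exact integral_sub_eq_zero

end Harmonic

/-- The Riesz kernel `‖z - ξ‖⁻ⁿ` with pole `ξ`. It is harmonic off its pole in dimension `n + 2`.
Its value at the pole is the junk value `0 ^ n`. -/
noncomputable def rieszKernel {E : Type*} [NormedAddCommGroup E] (n : ℕ) (ξ z : E) : ℝ :=
  ‖z - ξ‖⁻¹ ^ n

section RieszKernel

variable {E : Type*} [NormedAddCommGroup E] {n m : ℕ} {ξ y : E}

lemma rieszKernel_nonneg : 0 ≤ rieszKernel n ξ y := by
  unfold rieszKernel
  positivity

lemma rieszKernel_add_mul_norm_pow (h : y ≠ ξ) :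
    rieszKernel (n + m) ξ y * ‖y - ξ‖ ^ m = rieszKernel n ξ y := by
  rw [rieszKernel, rieszKernel, pow_add, mul_assoc, ← mul_pow,
    inv_mul_cancel₀ (norm_ne_zero_iff.2 (sub_ne_zero.2 h)), one_pow, mul_one]

lemma rieszKernel_eq_rpow :
    rieszKernel n ξ y = (‖y - ξ‖ ^ 2) ^ (-((n : ℝ) / 2)) := by
  rw [rieszKernel, ← Real.rpow_natCast_mul (norm_nonneg _), inv_pow, ← Real.rpow_natCast,
    ← Real.rpow_neg (norm_nonneg _)]
  congr 1
  push_cast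
  ring

variable [InnerProductSpace ℝ E]

lemma contDiffAt_rieszKernel {k : WithTop ℕ∞} (h : y ≠ ξ) :
    ContDiffAt ℝ k (rieszKernel n ξ) y :=
  (((contDiffAt_id.sub contDiffAt_const).norm ℝ (sub_ne_zero.2 h)).inv
    (norm_ne_zero_iff.2 (sub_ne_zero.2 h))).pow n

variable [CompleteSpace E]

lemma hasGradientAt_rieszKernel (h : y ≠ ξ) :
    HasGradientAt (rieszKernel n ξ) (-(n * rieszKernel (n + 2) ξ y) • (y - ξ)) y := by
  have norm_sq_ne_zero : ‖y - ξ‖ ^ 2 ≠ 0 := pow_ne_zero 2 (norm_ne_zero_iff.2 (sub_ne_zero.2 h))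
  have rpow_deriv := ((hasFDerivAt_id y).sub_const ξ).norm_sq.rpow_const
    (p := -((n : ℝ) / 2)) (.inl norm_sq_ne_zero)
  rw [hasGradientAt_iff_hasFDerivAt, show rieszKernel n ξ = _ from
    funext fun z ↦ rieszKernel_eq_rpow]
  refine rpow_deriv.congr_fderiv ?_
  ext v
  rw [rieszKernel_eq_rpow, show -(((n + 2 : ℕ) : ℝ) / 2) = -((n : ℝ) / 2) - 1 by push_cast; ring]
  simp
  ring

lemma two_mul_inner_gradient_rieszKernel (h : y ≠ ξ) (c : E) :
    2 * ⟪∇ (rieszKernel n ξ) y, y - c⟫ =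
      n * ((‖ξ - c‖ ^ 2 - ‖y - c‖ ^ 2) * rieszKernel (n + 2) ξ y - rieszKernel n ξ y) := by
  have polarization : ‖ξ - c‖ ^ 2 = ‖y - c‖ ^ 2 - 2 * ⟪y - ξ, y - c⟫ + ‖y - ξ‖ ^ 2 := by
    rw [real_inner_comm, ← norm_sub_sq_real]
    congr 2
    abel
  rw [(hasGradientAt_rieszKernel h).gradient, real_inner_smul_left, polarization,
    ← rieszKernel_add_mul_norm_pow (n := n) (m := 2) h]
  ring

variable [FiniteDimensional ℝ E]

lemma divergence_gradient_rieszKernel (hE : finrank ℝ E = n + 2) (h : y ≠ ξ) :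
    divergence (∇ (rieszKernel n ξ)) y = 0 := by
  have gradient_eq : ∇ (rieszKernel n ξ) =ᶠ[𝓝 y]
      fun z ↦ rieszKernel (n + 2) ξ z • (-(n : ℝ) • (z - ξ)) := by
    filter_upwards [isOpen_ne.mem_nhds h] with z hz
    rw [(hasGradientAt_rieszKernel hz).gradient, smul_smul]
    ring_nf
  have divergence_linear : divergence (fun z ↦ -(n : ℝ) • (z - ξ)) y = -(n : ℝ) * (n + 2) := by
    rw [divergence, fderiv_fun_const_smul (by fun_prop), fderiv_sub_const, fderiv_fun_id]
    simp [hE]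
  rw [divergence_congr gradient_eq, divergence_smul
    ((contDiffAt_rieszKernel (k := 1) h).differentiableAt one_ne_zero) (by fun_prop),
    divergence_linear, (hasGradientAt_rieszKernel h).gradient, real_inner_smul_left,
    real_inner_smul_right, real_inner_self_eq_norm_sq,
    ← rieszKernel_add_mul_norm_pow (n := n + 2) (m := 2) h]
  push_cast
  ring

lemma harmonicAt_rieszKernel (hE : finrank ℝ E = n + 2) (h : y ≠ ξ) :
    HarmonicAt (rieszKernel n ξ) y := by
  refine ⟨contDiffAt_rieszKernel h, ?_⟩
  filter_upwards [isOpen_ne.mem_nhds h] with z hz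
  rw [← divergence_gradient, divergence_gradient_rieszKernel hE hz,
    Pi.zero_apply]

end RieszKernel

section BoundaryPole

variable {E : Type*} [NormedAddCommGroup E] {m n : ℕ} {c x : E} {r R : ℝ}

lemma ne_of_mem_ball (hx : ‖x - c‖ = R) {y : E} (hy : y ∈ ball c R) : y ≠ x := by
  rintro rfl
  exact (mem_ball_iff_norm.1 hy).ne hx

variable [InnerProductSpace ℝ E]

lemma sub_le_norm_add_smul_sphere_sub (hx : ‖x - c‖ = R) (hr : 0 ≤ r) (ω : sphere (0 : E) 1) :
    R - r ≤ ‖c + r • (ω : E) - x‖ := by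
  have := norm_sub_norm_le (x - c) (r • (ω : E))
  rwa [hx, norm_smul_sphere hr, sub_sub, ← norm_sub_rev] at this

lemma norm_add_smul_sphere_sub_le (hx : ‖x - c‖ = R) (hr : r ∈ Icc 0 R) (ω : sphere (0 : E) 1) :
    ‖c + R • (ω : E) - x‖ ≤ 2 * ‖c + r • (ω : E) - x‖ := by
  have along_ray : ‖(R - r) • (ω : E)‖ = R - r := norm_smul_sphere (sub_nonneg.2 hr.2) ω
  have := norm_add_le ((R - r) • (ω : E)) (c + r • (ω : E) - x)
  rw [along_ray, show (R - r) • (ω : E) + (c + r • (ω : E) - x) = c + R • (ω : E) - x by module]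
    at this
  linarith [sub_le_norm_add_smul_sphere_sub hx hr.1 ω]

lemma rieszKernel_le_two_pow_mul (hx : ‖x - c‖ = R) (hr : r ∈ Icc 0 R) {ω : sphere (0 : E) 1}
    (hω : c + R • (ω : E) ≠ x) :
    rieszKernel n x (c + r • (ω : E)) ≤ 2 ^ n * rieszKernel n x (c + R • (ω : E)) := by
  have pos : 0 < ‖c + R • (ω : E) - x‖ := norm_pos_iff.2 (sub_ne_zero.2 hω)
  have dist_le := norm_add_smul_sphere_sub_le hx hr ω
  rw [rieszKernel, rieszKernel, ← mul_pow]
  gcongr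
  rw [← div_eq_mul_inv, inv_eq_one_div, div_le_div_iff₀ (by linarith) pos]
  linarith

lemma tendsto_rieszKernel_ray {ω : sphere (0 : E) 1} (hω : c + R • (ω : E) ≠ x) :
    Tendsto (fun r : ℝ ↦ rieszKernel n x (c + r • (ω : E))) (𝓝 R)
      (𝓝 (rieszKernel n x (c + R • (ω : E)))) :=
  (contDiffAt_rieszKernel (k := 0) hω).continuousAt.tendsto.comp
    (Continuous.tendsto (by fun_prop) R)

lemma harmonicOnNhd_rieszKernel [FiniteDimensional ℝ E] (hE : finrank ℝ E = m + 2)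
    (hx : ‖x - c‖ = R) : HarmonicOnNhd (rieszKernel m x) (ball c R) := fun _ hy ↦
  harmonicAt_rieszKernel hE (ne_of_mem_ball hx hy)

variable [MeasurableSpace E] [BorelSpace E]

lemma measurable_rieszKernel_sphere :
    Measurable fun ω : sphere (0 : E) 1 ↦ rieszKernel n x (c + r • (ω : E)) := by
  unfold rieszKernel
  fun_prop

variable [FiniteDimensional ℝ E] {μ : Measure E} [μ.IsAddHaarMeasure]

lemma integral_sphere_rieszKernel (hE : finrank ℝ E = m + 2) (hx : ‖x - c‖ = R)
    (hr : r ∈ Ico 0 R) :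
    ∫ ω : sphere (0 : E) 1, rieszKernel m x (c + r • (ω : E)) ∂μ.toSphere =
      μ.toSphere.real univ * R⁻¹ ^ m := by
  have : Nontrivial E := nontrivial_of_finrank_pos (R := ℝ) (by omega)
  rw [integral_sphere_eq_of_harmonicOnNhd (harmonicOnNhd_rieszKernel hE hx) hr, rieszKernel,
    norm_sub_rev, hx]

-- By Fatou's lemma, since the integrals over the concentric interior spheres are all equal.
lemma integrable_rieszKernel_sphere (hE : finrank ℝ E = m + 2) (hR : 0 < R) (hx : ‖x - c‖ = R) :
    Integrable (fun ω : sphere (0 : E) 1 ↦ rieszKernel m x (c + R • (ω : E))) μ.toSphere := by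
  have lintegral_eq {r : ℝ} (hr : r ∈ Ico 0 R) :
      ∫⁻ ω : sphere (0 : E) 1, ENNReal.ofReal (rieszKernel m x (c + r • (ω : E))) ∂μ.toSphere =
        ENNReal.ofReal (μ.toSphere.real univ * R⁻¹ ^ m) := by
    rw [← integral_sphere_rieszKernel hE hx hr, ofReal_integral_eq_lintegral_ofReal
      (integrable_sphere (harmonicOnNhd_rieszKernel hE hx).continuousOn
        (add_smul_sphere_mem_ball hr c)) (ae_of_all _ fun _ ↦ rieszKernel_nonneg)]
  have liminf_eq : ∀ᵐ ω : sphere (0 : E) 1 ∂μ.toSphere,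
      liminf (fun r : ℝ ↦ ENNReal.ofReal (rieszKernel m x (c + r • (ω : E)))) (𝓝[<] R) =
        ENNReal.ofReal (rieszKernel m x (c + R • (ω : E))) := by
    filter_upwards [ae_add_smul_sphere_ne (by omega) c x hR.ne'] with ω hω
    exact (ENNReal.tendsto_ofReal
      ((tendsto_rieszKernel_ray hω).mono_left nhdsWithin_le_nhds)).liminf_eq
  have fatou := lintegral_liminf_le (μ := μ.toSphere) (u := 𝓝[<] R)
    fun r : ℝ ↦ (measurable_rieszKernel_sphere (n := m) (c := c) (x := x) (r := r)).ennreal_ofReal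
  rw [lintegral_congr_ae liminf_eq, liminf_congr
    (mem_of_superset (Ico_mem_nhdsLT hR) fun r hr ↦ lintegral_eq hr), liminf_const] at fatou
  refine ⟨measurable_rieszKernel_sphere.aestronglyMeasurable, ?_⟩
  rw [hasFiniteIntegral_iff_ofReal (ae_of_all _ fun _ ↦ rieszKernel_nonneg)]
  exact fatou.trans_lt ENNReal.ofReal_lt_top

end BoundaryPole

section RegularizedDensity

/-- The density on the sphere of radius `r` about `c` used to approach the boundary integral over
the sphere through `x` from inside. The factor `(‖x - c‖ ^ 2 - r ^ 2) * rieszKernel (m + 2) x` is a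
multiple of the Poisson kernel, so the second term vanishes when `r = ‖x - c‖`, and for smaller `r`
it makes the total integral independent of `r`. -/
noncomputable def regularizedDensity {E : Type*} [NormedAddCommGroup E] [InnerProductSpace ℝ E]
    [CompleteSpace E] (m : ℕ) (u : E → ℝ) (c x : E) (r : ℝ) (ω : E) : ℝ :=
  rieszKernel m x (c + r • ω) * (2 * r * ⟪∇ u (c + r • ω), ω⟫ + m * u (c + r • ω)) -
    m * ((‖x - c‖ ^ 2 - r ^ 2) * rieszKernel (m + 2) x (c + r • ω) * (u (c + r • ω) - u x))

variable {E : Type*} [NormedAddCommGroup E] [InnerProductSpace ℝ E] {m : ℕ} {u : E → ℝ}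
  {c x : E} {r R : ℝ}

lemma continuous_comp_sphere (hu : ∀ y ∈ closedBall c R, ContDiffAt ℝ 1 u y)
    (hr : r ∈ Icc 0 R) : Continuous fun ω : sphere (0 : E) 1 ↦ u (c + r • (ω : E)) :=
  ContinuousOn.comp_continuous (fun y hy ↦ (hu y hy).continuousAt.continuousWithinAt)
    (by fun_prop) (add_smul_sphere_mem_closedBall hr c)

lemma abs_poisson_mul_sub_le (hx : ‖x - c‖ = R) (hr : r ∈ Ico 0 R) {ω : sphere (0 : E) 1} {C : ℝ}
    (hlip : |u (c + r • (ω : E)) - u x| ≤ C * ‖c + r • (ω : E) - x‖) :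
    |(‖x - c‖ ^ 2 - r ^ 2) * rieszKernel (m + 2) x (c + r • (ω : E)) *
        (u (c + r • (ω : E)) - u x)| ≤ 2 * R * C * rieszKernel m x (c + r • (ω : E)) := by
  have dist_ge := sub_le_norm_add_smul_sphere_sub hx hr.1 ω
  rw [← rieszKernel_add_mul_norm_pow (n := m) (m := 2)
    (ne_of_mem_ball hx (add_smul_sphere_mem_ball hr c ω))]
  set y := c + r • (ω : E)
  have sq_sub_sq_nonneg : 0 ≤ R ^ 2 - r ^ 2 := by nlinarith [hr.1, hr.2]
  have sq_sub_sq_le : R ^ 2 - r ^ 2 ≤ 2 * R * ‖y - x‖ := by nlinarith [hr.1, hr.2]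
  have kernel_nonneg : 0 ≤ rieszKernel (m + 2) x y := rieszKernel_nonneg
  rw [hx, abs_mul, abs_mul, abs_of_nonneg sq_sub_sq_nonneg, abs_of_nonneg kernel_nonneg]
  calc (R ^ 2 - r ^ 2) * rieszKernel (m + 2) x y * |u y - u x|
      ≤ (2 * R * ‖y - x‖) * rieszKernel (m + 2) x y * (C * ‖y - x‖) :=
        mul_le_mul (mul_le_mul_of_nonneg_right sq_sub_sq_le kernel_nonneg) hlip (abs_nonneg _)
          (mul_nonneg (sq_sub_sq_nonneg.trans sq_sub_sq_le) kernel_nonneg)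
    _ = _ := by ring

variable [FiniteDimensional ℝ E]

lemma regularizedDensity_of_norm_eq (hx : ‖x - c‖ = R) (ω : E) :
    regularizedDensity m u c x R ω =
      rieszKernel m x (c + R • ω) * (2 * R * ⟪∇ u (c + R • ω), ω⟫ + m * u (c + R • ω)) := by
  rw [regularizedDensity, hx, sub_self, zero_mul, zero_mul, mul_zero, sub_zero]

lemma regularizedDensity_eq (hr : 0 ≤ r) {ω : sphere (0 : E) 1} (hω : c + r • (ω : E) ≠ x) :
    regularizedDensity m u c x r ω =
      -(2 * r) * (u (c + r • (ω : E)) * ⟪∇ (rieszKernel m x) (c + r • (ω : E)), ω⟫ -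
        rieszKernel m x (c + r • (ω : E)) * ⟪∇ u (c + r • (ω : E)), ω⟫) +
      u x * (2 * r * ⟪∇ (rieszKernel m x) (c + r • (ω : E)), ω⟫ +
        m * rieszKernel m x (c + r • (ω : E))) := by
  have radial := two_mul_inner_gradient_rieszKernel (n := m) hω c
  rw [add_sub_cancel_left, norm_smul_sphere hr, real_inner_smul_right] at radial
  rw [regularizedDensity]
  linear_combination (u (c + r • (ω : E)) - u x) * radial

lemma tendsto_regularizedDensity {ω : sphere (0 : E) 1} (hω : c + R • (ω : E) ≠ x)
    (hu : ContDiffAt ℝ 1 u (c + R • (ω : E))) :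
    Tendsto (fun r ↦ regularizedDensity m u c x r ω) (𝓝 R)
      (𝓝 (regularizedDensity m u c x R ω)) := by
  have ray : Tendsto (fun r : ℝ ↦ c + r • (ω : E)) (𝓝 R) (𝓝 (c + R • (ω : E))) :=
    Continuous.tendsto (by fun_prop) R
  have u_ray := hu.continuousAt.tendsto.comp ray
  have gradient_ray := (contDiffAt_gradient (n := 0) hu).continuousAt.tendsto.comp ray
  have r_sq : Tendsto (fun r : ℝ ↦ r ^ 2) (𝓝 R) (𝓝 (R ^ 2)) := (continuous_pow 2).tendsto R
  exact ((tendsto_rieszKernel_ray hω).mul (((tendsto_id.const_mul 2).mul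
    (gradient_ray.inner tendsto_const_nhds)).add (u_ray.const_mul _))).sub
      ((((r_sq.const_sub _).mul (tendsto_rieszKernel_ray hω)).mul (u_ray.sub_const _)).const_mul _)

lemma abs_regularizedDensity_le (hx : ‖x - c‖ = R) (hr : r ∈ Ico 0 R) {ω : sphere (0 : E) 1}
    {C : ℝ} (hu : |u (c + r • (ω : E))| ≤ C) (hgrad : ‖∇ u (c + r • (ω : E))‖ ≤ C)
    (hlip : |u (c + r • (ω : E)) - u x| ≤ C * ‖c + r • (ω : E) - x‖) :
    |regularizedDensity m u c x r ω| ≤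
      (2 * R + m + 2 * m * R) * C * rieszKernel m x (c + r • (ω : E)) := by
  have poisson := abs_poisson_mul_sub_le (m := m) hx hr hlip
  have inner_le : |⟪∇ u (c + r • (ω : E)), ω⟫| ≤ C := by
    refine (abs_real_inner_le_norm _ _).trans ?_
    rwa [norm_eq_of_mem_sphere, mul_one]
  unfold regularizedDensity
  set y := c + r • (ω : E)
  have layers : |rieszKernel m x y * (2 * r * ⟪∇ u y, ω⟫ + m * u y)| ≤
      rieszKernel m x y * (2 * R * C + m * C) := by
    rw [abs_mul, abs_of_nonneg rieszKernel_nonneg]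
    refine mul_le_mul_of_nonneg_left ((abs_add_le _ _).trans ?_) rieszKernel_nonneg
    rw [abs_mul, abs_mul (m : ℝ), abs_of_nonneg (mul_nonneg zero_le_two hr.1), Nat.abs_cast]
    have := hr.1.trans hr.2.le
    gcongr
    exact hr.2.le
  refine (abs_sub _ _).trans ?_
  rw [abs_mul (m : ℝ), Nat.abs_cast]
  linarith [mul_le_mul_of_nonneg_left poisson (Nat.cast_nonneg m)]

lemma exists_bound_of_contDiffAt {s : Set E} (hs : IsCompact s) (hconvex : Convex ℝ s)
    (hu : ∀ y ∈ s, ContDiffAt ℝ 1 u y) :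
    ∃ C, ∀ y ∈ s, |u y| ≤ C ∧ ‖∇ u y‖ ≤ C ∧ ∀ z ∈ s, |u y - u z| ≤ C * ‖y - z‖ := by
  obtain ⟨A, hA⟩ := hs.exists_bound_of_continuousOn
    fun y hy ↦ (hu y hy).continuousAt.continuousWithinAt
  obtain ⟨B, hB⟩ := hs.exists_bound_of_continuousOn
    fun y hy ↦ (contDiffAt_gradient (n := 0) (hu y hy)).continuousAt.continuousWithinAt
  refine ⟨max A B, fun y hy ↦ ⟨(hA y hy).trans (le_max_left _ _),
    (hB y hy).trans (le_max_right _ _), fun z hz ↦ ?_⟩⟩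
  refine hconvex.norm_image_sub_le_of_norm_fderiv_le
    (fun w hw ↦ (hu w hw).differentiableAt one_ne_zero) (fun w hw ↦ ?_) hz hy
  rw [← toDual_gradient, LinearIsometryEquiv.norm_map]
  exact (hB w hw).trans (le_max_right _ _)

lemma continuous_inner_gradient_sphere (hu : ∀ y ∈ closedBall c R, ContDiffAt ℝ 1 u y)
    (hr : r ∈ Icc 0 R) :
    Continuous fun ω : sphere (0 : E) 1 ↦ ⟪∇ u (c + r • (ω : E)), (ω : E)⟫ :=
  (ContinuousOn.comp_continuous (fun y hy ↦
    (contDiffAt_gradient (n := 0) (hu y hy)).continuousAt.continuousWithinAt) (by fun_prop)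
    (add_smul_sphere_mem_closedBall hr c)).inner continuous_subtype_val

variable [MeasurableSpace E] [BorelSpace E]

lemma measurable_regularizedDensity (hu : ∀ y ∈ closedBall c R, ContDiffAt ℝ 1 u y)
    (hr : r ∈ Icc 0 R) :
    Measurable fun ω : sphere (0 : E) 1 ↦ regularizedDensity m u c x r ω := by
  have inner_measurable := (continuous_inner_gradient_sphere hu hr).measurable
  have u_measurable := (continuous_comp_sphere hu hr).measurable
  exact (measurable_rieszKernel_sphere.mul ((inner_measurable.const_mul _).add
    (u_measurable.const_mul _))).sub (((measurable_rieszKernel_sphere.const_mul _).mul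
      (u_measurable.sub_const _)).const_mul _)

variable {μ : Measure E} [μ.IsAddHaarMeasure]

lemma integral_regularizedDensity (hE : finrank ℝ E = m + 2) (hx : ‖x - c‖ = R)
    (hu : HarmonicOnNhd u (ball c R)) (hr : r ∈ Ioo 0 R) :
    ∫ ω : sphere (0 : E) 1, regularizedDensity m u c x r ω ∂μ.toSphere =
      m * μ.toSphere.real univ * R⁻¹ ^ m * u x := by
  have : Nontrivial E := nontrivial_of_finrank_pos (R := ℝ) (by omega)
  have hr₀ : r ∈ Icc 0 r := right_mem_Icc.2 hr.1.le
  have kernel_harmonic := harmonicOnNhd_rieszKernel hE hx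
  have contDiffAt {w : E → ℝ} (hw : HarmonicOnNhd w (ball c R)) (y) (hy : y ∈ closedBall c r) :
      ContDiffAt ℝ 1 w y := (hw y (closedBall_subset_ball hr.2 hy)).1.of_le one_le_two
  have u_continuous := continuous_comp_sphere (contDiffAt hu) hr₀
  have u_flux_continuous := continuous_inner_gradient_sphere (contDiffAt hu) hr₀
  have kernel_continuous := continuous_comp_sphere (contDiffAt kernel_harmonic) hr₀
  have kernel_flux_continuous := continuous_inner_gradient_sphere (contDiffAt kernel_harmonic) hr₀
  have integrable {g : sphere (0 : E) 1 → ℝ} (hg : Continuous g) : Integrable g μ.toSphere :=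
    hg.integrable_of_hasCompactSupport (.of_compactSpace _)
  simp only [fun ω : sphere (0 : E) 1 ↦ regularizedDensity_eq (m := m) (u := u) hr.1.le
    (ne_of_mem_ball hx (add_smul_sphere_mem_ball (Ioo_subset_Ico_self hr) c ω))]
  rw [integral_add
      (integrable (((u_continuous.fun_mul kernel_flux_continuous).fun_sub
        (kernel_continuous.fun_mul u_flux_continuous)).const_mul _))
      (integrable (((kernel_flux_continuous.const_mul _).fun_add
        (kernel_continuous.const_mul _)).const_mul _)),
    integral_const_mul, integral_const_mul, integral_add
      (integrable (kernel_flux_continuous.const_mul _))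
      (integrable (kernel_continuous.const_mul _)),
    integral_const_mul, integral_const_mul, integral_sphere_green hu kernel_harmonic hr,
    integral_sphere_inner_gradient_eq_zero kernel_harmonic hr,
    integral_sphere_rieszKernel hE hx (Ioo_subset_Ico_self hr)]
  ring

lemma integrable_regularizedDensity (hE : finrank ℝ E = m + 2) (hR : 0 < R) (hx : ‖x - c‖ = R)
    (hu : ∀ y ∈ closedBall c R, ContDiffAt ℝ 1 u y) :
    Integrable (fun ω : sphere (0 : E) 1 ↦ regularizedDensity m u c x R ω) μ.toSphere := by
  simp only [regularizedDensity_of_norm_eq hx]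
  have hR' : R ∈ Icc 0 R := right_mem_Icc.2 hR.le
  have continuous : Continuous fun ω : sphere (0 : E) 1 ↦
      2 * R * ⟪∇ u (c + R • (ω : E)), (ω : E)⟫ + m * u (c + R • (ω : E)) :=
    ((continuous_inner_gradient_sphere hu hR').const_mul _).add
      ((continuous_comp_sphere hu hR').const_mul _)
  obtain ⟨C, hC⟩ := isCompact_univ.exists_bound_of_continuousOn continuous.continuousOn
  exact (integrable_rieszKernel_sphere hE hR hx).mul_bdd continuous.aestronglyMeasurable
    (ae_of_all _ fun ω ↦ hC ω (mem_univ ω))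

lemma tendsto_integral_regularizedDensity (hE : finrank ℝ E = m + 2) (hR : 0 < R)
    (hx : ‖x - c‖ = R) (hu : ∀ y ∈ closedBall c R, ContDiffAt ℝ 1 u y) :
    Tendsto (fun r ↦ ∫ ω : sphere (0 : E) 1, regularizedDensity m u c x r ω ∂μ.toSphere) (𝓝[<] R)
      (𝓝 (∫ ω : sphere (0 : E) 1, regularizedDensity m u c x R ω ∂μ.toSphere)) := by
  have off_pole := ae_add_smul_sphere_ne (μ := μ) (by omega) c x hR.ne'
  have hxc : x ∈ closedBall c R := mem_closedBall_iff_norm.2 hx.le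
  obtain ⟨C, hC⟩ := exists_bound_of_contDiffAt (isCompact_closedBall c R) (convex_closedBall c R) hu
  have hC₀ : 0 ≤ C := (abs_nonneg _).trans (hC x hxc).1
  refine tendsto_integral_filter_of_dominated_convergence
    (fun ω ↦ (2 * R + m + 2 * m * R) * C * (2 ^ m * rieszKernel m x (c + R • (ω : E)))) ?_ ?_
    (((integrable_rieszKernel_sphere hE hR hx).const_mul _).const_mul _) ?_
  · filter_upwards [Ico_mem_nhdsLT hR] with r hr
    exact (measurable_regularizedDensity hu (Ico_subset_Icc_self hr)).aestronglyMeasurable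
  · filter_upwards [Ico_mem_nhdsLT hR] with r hr
    filter_upwards [off_pole] with ω hω
    have hr' := Ico_subset_Icc_self hr
    obtain ⟨u_le, gradient_le, lipschitz⟩ := hC _ (add_smul_sphere_mem_closedBall hr' c ω)
    refine (abs_regularizedDensity_le hx hr u_le gradient_le (lipschitz x hxc)).trans ?_
    gcongr
    exact rieszKernel_le_two_pow_mul hx hr' hω
  · filter_upwards [off_pole] with ω hω
    exact (tendsto_regularizedDensity hω (hu _ (add_smul_sphere_mem_closedBall
      (right_mem_Icc.2 hR.le) c ω))).mono_left nhdsWithin_le_nhds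

lemma integral_boundary_regularizedDensity (hE : finrank ℝ E = m + 2) (hR : 0 < R)
    (hx : ‖x - c‖ = R) (hu : ∀ y ∈ closedBall c R, ContDiffAt ℝ 1 u y)
    (hharm : HarmonicOnNhd u (ball c R)) :
    ∫ ω : sphere (0 : E) 1, regularizedDensity m u c x R ω ∂μ.toSphere =
      m * μ.toSphere.real univ * R⁻¹ ^ m * u x :=
  tendsto_nhds_unique_of_eventuallyEq (tendsto_integral_regularizedDensity hE hR hx hu)
    tendsto_const_nhds (mem_of_superset (Ioo_mem_nhdsLT hR)
      fun _ hr ↦ integral_regularizedDensity hE hx hharm hr)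

end RegularizedDensity

section FundamentalSolution

variable {E : Type*} [NormedAddCommGroup E] [InnerProductSpace ℝ E] [FiniteDimensional ℝ E]
  [MeasurableSpace E] [BorelSpace E]

/-- The fundamental solution of `-Δ`, normalized by the surface area of the unit sphere. The
truncated subtraction makes this meaningful only in dimension at least three. -/
noncomputable def fundamentalSolution (z : E) : ℝ :=
  ((finrank ℝ E - 2 : ℕ) * (volume : Measure E).toSphere.real univ)⁻¹ *
    rieszKernel (finrank ℝ E - 2) 0 z

lemma fundamentalSolution_sub {m : ℕ} (hE : finrank ℝ E = m + 2) (y x : E) :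
    fundamentalSolution (y - x) =
      (m * (volume : Measure E).toSphere.real univ)⁻¹ * rieszKernel m x y := by
  rw [fundamentalSolution, hE, Nat.add_sub_cancel, rieszKernel, rieszKernel, sub_zero]

lemma two_mul_inner_gradient_fundamentalSolution {m : ℕ} (hE : finrank ℝ E = m + 2) {c x y : E}
    (hxy : ‖y - c‖ = ‖x - c‖) (h : y ≠ x) :
    2 * ⟪∇ fundamentalSolution (y - x), y - c⟫ = -(m * fundamentalSolution (y - x)) := by
  have eq_const_smul : fundamentalSolution = fun z : E ↦
      (m * (volume : Measure E).toSphere.real univ)⁻¹ • rieszKernel m 0 z := funext fun z ↦ by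
    rw [smul_eq_mul, ← fundamentalSolution_sub hE, sub_zero]
  have kernel_diff := (contDiffAt_rieszKernel (n := m) (k := 1) (sub_ne_zero.2 h)).differentiableAt
    one_ne_zero
  have radial := two_mul_inner_gradient_rieszKernel (n := m) (sub_ne_zero.2 h) (c - x)
  rw [sub_sub_sub_cancel_right, zero_sub, norm_neg, norm_sub_rev c x, hxy, sub_self, zero_mul,
    zero_sub] at radial
  rw [inner_gradient_left] at radial ⊢
  rw [eq_const_smul, fderiv_fun_const_smul kernel_diff]
  simp only [smul_apply, smul_eq_mul]
  linear_combination (m * (volume : Measure E).toSphere.real univ)⁻¹ * radial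

lemma mul_regularizedDensity_eq {m : ℕ} (hE : finrank ℝ E = m + 2) {φ : E → ℝ} {c x : E} {R : ℝ}
    (hR : 0 ≤ R) (hx : ‖x - c‖ = R) {ω : sphere (0 : E) 1} (hω : c + R • (ω : E) ≠ x) :
    R ^ m / (2 * (m * (volume : Measure E).toSphere.real univ)) *
        regularizedDensity m φ c x R ω =
      (fundamentalSolution (c + R • (ω : E) - x) * ⟪∇ φ (c + R • (ω : E)), ω⟫ -
        φ (c + R • (ω : E)) * ⟪∇ fundamentalSolution (c + R • (ω : E) - x), ω⟫) *
          R ^ (finrank ℝ E - 1) := by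
  have radial := two_mul_inner_gradient_fundamentalSolution hE (c := c)
    (by rw [add_sub_cancel_left, norm_smul_sphere hR, hx]) hω
  rw [add_sub_cancel_left, real_inner_smul_right] at radial
  rw [regularizedDensity_of_norm_eq hx, show finrank ℝ E - 1 = m + 1 by omega]
  rw [fundamentalSolution_sub hE] at radial ⊢
  linear_combination (φ (c + R • (ω : E)) * R ^ m / 2) * radial

theorem stmt_6_general (hE : 3 ≤ finrank ℝ E) {φ : E → ℝ} {c x : E} {R : ℝ} (hR : 0 < R)
    (hφ : ∀ y ∈ closedBall c R, ContDiffAt ℝ 1 φ y) (hharm : HarmonicOnNhd φ (ball c R))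
    (hx : ‖x - c‖ = R) :
    Integrable (fun ω : sphere (0 : E) 1 ↦
      (fundamentalSolution (c + R • (ω : E) - x) * ⟪∇ φ (c + R • (ω : E)), ω⟫ -
        φ (c + R • (ω : E)) * ⟪∇ fundamentalSolution (c + R • (ω : E) - x), ω⟫) *
          R ^ (finrank ℝ E - 1)) volume.toSphere ∧
    1 / 2 * φ x = ∫ ω : sphere (0 : E) 1,
      (fundamentalSolution (c + R • (ω : E) - x) * ⟪∇ φ (c + R • (ω : E)), ω⟫ -
        φ (c + R • (ω : E)) * ⟪∇ fundamentalSolution (c + R • (ω : E) - x), ω⟫) *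
          R ^ (finrank ℝ E - 1) ∂volume.toSphere := by
  obtain ⟨m, hm, hEm⟩ : ∃ m, m ≠ 0 ∧ finrank ℝ E = m + 2 :=
    ⟨finrank ℝ E - 2, by omega, by omega⟩
  have : Nontrivial E := nontrivial_of_finrank_pos (R := ℝ) (by omega)
  have : NeZero (volume : Measure E).toSphere := ⟨Measure.toSphere_ne_zero _⟩
  have area_ne_zero : (volume : Measure E).toSphere.real univ ≠ 0 := measureReal_univ_ne_zero
  have density_eq := (ae_add_smul_sphere_ne (μ := volume) (by omega) c x hR.ne').mono
    fun ω hω ↦ mul_regularizedDensity_eq (φ := φ) hEm hR.le hx hω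
  constructor
  · exact ((integrable_regularizedDensity hEm hR hx hφ).const_mul _).congr density_eq
  · rw [← integral_congr_ae density_eq, integral_const_mul,
      integral_boundary_regularizedDensity hEm hR hx hφ hharm, inv_pow]
    field_simp

end FundamentalSolution

lemma harmonicOnNhd_of_lap_eq_zero {u : EuclideanSpace ℝ (Fin 3) → ℝ}
    {U : Set (EuclideanSpace ℝ (Fin 3))} (hU : IsOpen U) (hu : ContDiffOn ℝ 2 u U)
    (hlap : ∀ y ∈ U, lap u y = 0) : HarmonicOnNhd u U := by
  have lap_eq_laplacian (y) (hy : y ∈ U) : lap u y = Δ u y := by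
    have fderiv_diff : DifferentiableAt ℝ (fderiv ℝ u) y :=
      ((hu.contDiffAt (hU.mem_nhds hy)).fderiv_right (m := 1) le_rfl).differentiableAt one_ne_zero
    rw [laplacian_eq_iteratedFDeriv_orthonormalBasis u (EuclideanSpace.basisFun (Fin 3) ℝ), lap]
    refine Finset.sum_congr rfl fun i _ ↦ ?_
    rw [fderiv_clm_apply fderiv_diff (differentiableAt_const _), iteratedFDeriv_two_apply]
    simp
  refine fun y hy ↦ ⟨hu.contDiffAt (hU.mem_nhds hy), ?_⟩
  filter_upwards [hU.mem_nhds hy] with z hz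
  rw [← lap_eq_laplacian z hz, hlap z hz, Pi.zero_apply]

lemma fundamentalSolution_eq_G : (fundamentalSolution : EuclideanSpace ℝ (Fin 3) → ℝ) = G := by
  have area : (volume : Measure (EuclideanSpace ℝ (Fin 3))).toSphere.real univ =
      4 * Real.pi := by
    rw [Measure.toSphere_real_apply_univ, measureReal_def, EuclideanSpace.volume_ball_fin_three]
    simp [ENNReal.toReal_ofReal (show 0 ≤ Real.pi * 4 / 3 by positivity)]
    ring
  ext z
  rw [← sub_zero z, fundamentalSolution_sub (m := 1) finrank_euclideanSpace_fin, area, G,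
    rieszKernel]
  ring_nf

/-- **Boundary trace of the representation formula with coefficient `c(x) = 1/2` on a
sphere**: if `φ` is harmonic on an open neighborhood of the closed ball `B(c, R)`,
then for every boundary point `x` (‖x − c‖ = R) the boundary-integral integrand is
integrable on `S²` and
`(1/2) φ(x) = ∫_{S²} [G(c + Rω − x) (∇φ(c + Rω) · ω) − φ(c + Rω) (∇G(c + Rω − x) · ω)] R² dσ(ω)`. -/
theorem stmt_6 (c : EuclideanSpace ℝ (Fin 3)) (R : ℝ) (hR : 0 < R)
    (φ : EuclideanSpace ℝ (Fin 3) → ℝ)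
    (U : Set (EuclideanSpace ℝ (Fin 3))) (hU : IsOpen U)
    (hBU : closedBall c R ⊆ U)
    (hφ : ContDiffOn ℝ 2 φ U)
    (hharm : ∀ y ∈ U, lap φ y = 0) :
    ∀ x : EuclideanSpace ℝ (Fin 3), ‖x - c‖ = R →
      Integrable (fun ω : sphere (0 : EuclideanSpace ℝ (Fin 3)) 1 =>
        (G (c + R • (ω : EuclideanSpace ℝ (Fin 3)) - x) *
            ⟪gradient φ (c + R • (ω : EuclideanSpace ℝ (Fin 3))),
              (ω : EuclideanSpace ℝ (Fin 3))⟫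
          - φ (c + R • (ω : EuclideanSpace ℝ (Fin 3))) *
            ⟪gradient G (c + R • (ω : EuclideanSpace ℝ (Fin 3)) - x),
              (ω : EuclideanSpace ℝ (Fin 3))⟫) * R ^ 2)
        ((volume : Measure (EuclideanSpace ℝ (Fin 3))).toSphere) ∧
      (1 / 2 : ℝ) * φ x = ∫ ω : sphere (0 : EuclideanSpace ℝ (Fin 3)) 1,
        (G (c + R • (ω : EuclideanSpace ℝ (Fin 3)) - x) *
            ⟪gradient φ (c + R • (ω : EuclideanSpace ℝ (Fin 3))),
              (ω : EuclideanSpace ℝ (Fin 3))⟫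
          - φ (c + R • (ω : EuclideanSpace ℝ (Fin 3))) *
            ⟪gradient G (c + R • (ω : EuclideanSpace ℝ (Fin 3)) - x),
              (ω : EuclideanSpace ℝ (Fin 3))⟫) * R ^ 2
        ∂((volume : Measure (EuclideanSpace ℝ (Fin 3))).toSphere) := by
  intro x hx
  have harmonic : HarmonicOnNhd φ (ball c R) := fun y hy ↦
    harmonicOnNhd_of_lap_eq_zero hU hφ hharm y (hBU (ball_subset_closedBall hy))
  have contDiffAt (y) (hy : y ∈ closedBall c R) : ContDiffAt ℝ 1 φ y :=
    (hφ.contDiffAt (hU.mem_nhds (hBU hy))).of_le one_le_two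
  simpa only [fundamentalSolution_eq_G, finrank_euclideanSpace_fin] using
    stmt_6_general (by rw [finrank_euclideanSpace_fin]) hR contDiffAt harmonic hx
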